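/- Let n ≥ 1, let S_n act on ℝ^n by permuting coordinates, let C = { v ↦ x·v + y𝟙 : x, y ∈ ℝ } ⊆ Aff_{S_n}(ℝ^n, ℝ^n) be the width-1 convolutional layer space and P = { v ↦ (x_1 Id + x_2 𝟙𝟙ᵀ)v + y𝟙 : x_1, x_2, y ∈ ℝ } ⊆ Aff_{S_n}(ℝ^n, ℝ^n) the PointNet (DeepSets) layer space, where 𝟙 = (1,…,1)ᵀ. Assume σ : ℝ → ℝ is continuous and not a polynomial. Then U(C, P, C) = U(P, P, P) = C_{S_n}(ℝ^n, ℝ^n), the space of all continuous S_n-equivariant maps ℝ^n → ℝ^n. -/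

import Mathlib

open scoped BigOperators

noncomputable section EquivUnivPreamble

/-- Point-wise activation: apply `σ` coordinatewise. -/
def act (σ : ℝ → ℝ) {Z : Type} (v : Z → ℝ) : Z → ℝ := fun z => σ (v z)

/-- The action of a group element `g` on a real-valued function `v : Y → ℝ` induced by a
`G`-action on `Y` (the permutation representation `ℝ^Y`): `(g • v) y = v (g⁻¹ • y)`. -/
def pSMul {G Y : Type} [Group G] [MulAction G Y] (g : G) (v : Y → ℝ) : Y → ℝ :=
  fun y => v (g⁻¹ • y)

/-- `G`-equivariance of a map between permutation representations. -/
def Equivariant (G : Type) [Group G] {Y Z : Type} [MulAction G Y] [MulAction G Z]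
    (f : (Y → ℝ) → (Z → ℝ)) : Prop :=
  ∀ (g : G) (v : Y → ℝ), f (pSMul g v) = pSMul g (f v)

/-- A map between permutation representations is affine. -/
def IsAffine {Y Z : Type} (f : (Y → ℝ) → (Z → ℝ)) : Prop :=
  ∃ (φ : (Y → ℝ) →ₗ[ℝ] (Z → ℝ)) (b : Z → ℝ), ∀ v, f v = φ v + b

/-- A layer space: the set of maps `v ↦ ∑ᵢ cᵢ φⁱ(v) + b` where `φ¹, …, φᵏ` are fixed
`G`-equivariant linear maps and the bias `b` ranges over all functions constant on
`G`-orbits (i.e. all `∑ⱼ yⱼ 1_{Xⱼ}` with `Xⱼ` the orbits). -/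
def IsLayerSpace (G : Type) [Group G] {Y Z : Type} [MulAction G Y] [MulAction G Z]
    (M : Set ((Y → ℝ) → (Z → ℝ))) : Prop :=
  ∃ (k : ℕ) (φ : Fin k → ((Y → ℝ) →ₗ[ℝ] (Z → ℝ))),
    (∀ i, Equivariant G (φ i : (Y → ℝ) → (Z → ℝ))) ∧
    M = { f | ∃ (c : Fin k → ℝ) (b : Z → ℝ),
            (∀ (g : G) (z : Z), b (g • z) = b z) ∧
            ∀ v, f v = (∑ i, c i • φ i v) + b }

/-- `M^{k×h}`: the layer space `M` with input multiplicity `k` and output multiplicity `h`,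
`(v₁,…,v_k) ↦ (∑ⱼ f_{1,j}(vⱼ), …, ∑ⱼ f_{h,j}(vⱼ))`, identifying `V ⊗ ℝᵏ` with
`Fin k × Y → ℝ`. -/
def layerPow {Y Z : Type} (M : Set ((Y → ℝ) → (Z → ℝ))) (k h : ℕ) :
    Set ((Fin k × Y → ℝ) → (Fin h × Z → ℝ)) :=
  { F | ∃ f : Fin h → Fin k → ((Y → ℝ) → (Z → ℝ)),
      (∀ i j, f i j ∈ M) ∧
      ∀ (v : Fin k × Y → ℝ) (p : Fin h × Z), F v p = ∑ j, f p.1 j (fun y => v (j, y)) p.2 }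

/-- `M^{1×h}` under the canonical identification `V ⊗ ℝ¹ ≅ V` of the input. -/
def layerPowIn {Y Z : Type} (M : Set ((Y → ℝ) → (Z → ℝ))) (h : ℕ) :
    Set ((Y → ℝ) → (Fin h × Z → ℝ)) :=
  { F | ∃ f : Fin h → ((Y → ℝ) → (Z → ℝ)), (∀ i, f i ∈ M) ∧
      ∀ (v : Y → ℝ) (p : Fin h × Z), F v p = f p.1 v p.2 }

/-- `M^{k×1}` under the canonical identification `W ⊗ ℝ¹ ≅ W` of the output. -/
def layerPowOut {Y Z : Type} (M : Set ((Y → ℝ) → (Z → ℝ))) (k : ℕ) :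
    Set ((Fin k × Y → ℝ) → (Z → ℝ)) :=
  { F | ∃ f : Fin k → ((Y → ℝ) → (Z → ℝ)), (∀ j, f j ∈ M) ∧
      ∀ (v : Fin k × Y → ℝ) (z : Z), F v z = ∑ j, f j (fun y => v (j, y)) z }

/-- Evaluation of a chain of `d+1` layers with the point-wise activation `σ` between
consecutive layers: `φ_d ∘ σ̃ ∘ ⋯ ∘ σ̃ ∘ φ_0`. -/
def chainEval (σ : ℝ → ℝ) : ∀ (d : ℕ) (Y : Fin (d + 2) → Type)
    (φ : ∀ i : Fin (d + 1), (Y i.castSucc → ℝ) → (Y i.succ → ℝ)),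
    (Y 0 → ℝ) → (Y (Fin.last (d + 1)) → ℝ)
  | 0, _, φ => φ 0
  | (d + 1), Y, φ => fun v =>
      φ (Fin.last (d + 1))
        (act σ (chainEval σ d (fun i : Fin (d + 2) => Y i.castSucc)
          (fun i : Fin (d + 1) => φ i.castSucc) v))

/-- The neural space `N(M₀, …, M_d)` of a chain of `d+1` layer spaces. -/
def NeuralSpace (σ : ℝ → ℝ) (d : ℕ) (Y : Fin (d + 2) → Type)
    (M : ∀ i : Fin (d + 1), Set ((Y i.castSucc → ℝ) → (Y i.succ → ℝ))) :
    Set ((Y 0 → ℝ) → (Y (Fin.last (d + 1)) → ℝ)) :=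
  { F | ∃ φ : ∀ i : Fin (d + 1), (Y i.castSucc → ℝ) → (Y i.succ → ℝ),
      (∀ i, φ i ∈ M i) ∧ F = chainEval σ d Y φ }

/-- All networks `N(M₀^{1×k₁}, M₁^{k₁×k₂}, …, M_d^{k_d×k})` for the chain `M₀,…,M_d`, with
arbitrary interior multiplicities and fixed output multiplicity `k` (union over the interior
multiplicities). -/
def WPre (σ : ℝ → ℝ) : ∀ (d : ℕ) (Y : Fin (d + 2) → Type)
    (M : ∀ i : Fin (d + 1), Set ((Y i.castSucc → ℝ) → (Y i.succ → ℝ))) (k : ℕ),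
    Set ((Y 0 → ℝ) → (Fin k × Y (Fin.last (d + 1)) → ℝ))
  | 0, _, M, k => layerPowIn (M 0) k
  | (d + 1), Y, M, k =>
      { F | ∃ (k' : ℕ) (g : (Y 0 → ℝ) → (Fin k' × Y (Fin.last (d + 1)).castSucc → ℝ)),
          g ∈ WPre σ d (fun i : Fin (d + 2) => Y i.castSucc)
                (fun i : Fin (d + 1) => M i.castSucc) k' ∧
          ∃ f ∈ layerPow (M (Fin.last (d + 1))) k' k,
          F = fun v => f (act σ (g v)) }

/-- The network space `N(M₀^{1×k}, M₁^{k×k}, …, M_d^{k×k})`: all multiplicities equal to `k`. -/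
def WFix (σ : ℝ → ℝ) : ∀ (d : ℕ) (Y : Fin (d + 2) → Type)
    (M : ∀ i : Fin (d + 1), Set ((Y i.castSucc → ℝ) → (Y i.succ → ℝ))) (k : ℕ),
    Set ((Y 0 → ℝ) → (Fin k × Y (Fin.last (d + 1)) → ℝ))
  | 0, _, M, k => layerPowIn (M 0) k
  | (d + 1), Y, M, k =>
      { F | ∃ g ∈ WFix σ d (fun i : Fin (d + 2) => Y i.castSucc)
                (fun i : Fin (d + 1) => M i.castSucc) k,
          ∃ f ∈ layerPow (M (Fin.last (d + 1))) k k,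
          F = fun v => f (act σ (g v)) }

/-- Closure in the topology of uniform convergence on compact sets. -/
def UnifClosure {A B : Type} [TopologicalSpace A] [PseudoMetricSpace B]
    (S : Set (A → B)) : Set (A → B) :=
  { F | ∀ K : Set A, IsCompact K → ∀ ε : ℝ, 0 < ε → ∃ g ∈ S, ∀ x ∈ K, dist (F x) (g x) < ε }

/-- Separation relation of a family of functions. -/
def sepRel {A B : Type} (S : Set (A → B)) : Set (A × A) :=
  { p | ∀ f ∈ S, f p.1 = f p.2 }

/-- Entry-wise separation relation at the output entry `z`. -/
def sepRelAt {A Z : Type} (S : Set (A → (Z → ℝ))) (z : Z) : Set (A × A) :=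
  { p | ∀ f ∈ S, f p.1 z = f p.2 z }

/-- `C_ρ(A, B)`: continuous functions respecting the relation `ρ`. -/
def Crho {A B : Type} [TopologicalSpace A] [TopologicalSpace B] (ρ : Set (A × A)) :
    Set (A → B) :=
  { f | Continuous f ∧ ∀ p ∈ ρ, f p.1 = f p.2 }

/-- `C_ρ̄(A, ℝ^Z)` for a family of entry-wise relations `ρ̄ = (ρ_z)_{z ∈ Z}`. -/
def CrhoEntryRel {A Z : Type} [TopologicalSpace A] (ρ : Z → Set (A × A)) :
    Set (A → (Z → ℝ)) :=
  { f | Continuous f ∧ ∀ (z : Z), ∀ p ∈ ρ z, f p.1 z = f p.2 z }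

/-- `σ` is not a polynomial function. -/
def NotPolynomial (σ : ℝ → ℝ) : Prop :=
  ¬ ∃ p : Polynomial ℝ, ∀ x : ℝ, σ x = Polynomial.eval x p

/-- `c+1` widened copies of the layer space `M ⊆ Aff_G(ℝ^Z, ℝ^Z)`, from input multiplicity
`kin` to output multiplicity `kout` (union over interior multiplicities). -/
def WRep (σ : ℝ → ℝ) {Z : Type} (M : Set ((Z → ℝ) → (Z → ℝ))) :
    ∀ (_c kin kout : ℕ), Set ((Fin kin × Z → ℝ) → (Fin kout × Z → ℝ))
  | 0, kin, kout => layerPow M kin kout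
  | (c + 1), kin, kout =>
      { F | ∃ k, ∃ g ∈ WRep σ M c kin k, ∃ f ∈ layerPow M k kout,
          F = fun v => f (act σ (g v)) }

/-- `c+1` widened copies of `M`, starting at input multiplicity `kin` and ending with
output multiplicity `1` (canonically identified with `ℝ^Z`). -/
def WRepOut (σ : ℝ → ℝ) {Z : Type} (M : Set ((Z → ℝ) → (Z → ℝ))) :
    ∀ (_c kin : ℕ), Set ((Fin kin × Z → ℝ) → (Z → ℝ))
  | 0, kin => layerPowOut M kin
  | (c + 1), kin =>
      { F | ∃ k, ∃ g ∈ WRep σ M c kin k, ∃ f ∈ layerPowOut M k,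
          F = fun v => f (act σ (g v)) }

/-- `c+1` widened copies of `M`, with input multiplicity `1` (identified with `ℝ^Z`) and
output multiplicity `k`. -/
def WRepIn (σ : ℝ → ℝ) {Z : Type} (M : Set ((Z → ℝ) → (Z → ℝ))) :
    ∀ (_c k : ℕ), Set ((Z → ℝ) → (Fin k × Z → ℝ))
  | 0, k => layerPowIn M k
  | (c + 1), k =>
      { F | ∃ k', ∃ g ∈ WRepIn σ M c k', ∃ f ∈ layerPow M k' k,
          F = fun v => f (act σ (g v)) }

/-- The universality class `U(M, …, M)` of `c+2` copies of a layer space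
`M ⊆ Aff_G(ℝ^Z, ℝ^Z)`. -/
def UClassRep (σ : ℝ → ℝ) {Z : Type} [Fintype Z] (M : Set ((Z → ℝ) → (Z → ℝ))) (c : ℕ) :
    Set ((Z → ℝ) → (Z → ℝ)) :=
  UnifClosure { F | ∃ k, ∃ g ∈ WRepIn σ M c k, ∃ f ∈ layerPowOut M k,
      F = fun v => f (act σ (g v)) }

/-- The universality class `U(M₀, …, M_d, M, …, M)` of the chain `M₀, …, M_d` followed by
`c+1` copies of `M`. -/
def UClassPreRep (σ : ℝ → ℝ) (d : ℕ) (Y : Fin (d + 2) → Type)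
    [Fintype (Y (Fin.last (d + 1)))]
    (Mpre : ∀ i : Fin (d + 1), Set ((Y i.castSucc → ℝ) → (Y i.succ → ℝ)))
    (M : Set ((Y (Fin.last (d + 1)) → ℝ) → (Y (Fin.last (d + 1)) → ℝ))) (c : ℕ) :
    Set ((Y 0 → ℝ) → (Y (Fin.last (d + 1)) → ℝ)) :=
  UnifClosure { F | ∃ k, ∃ g ∈ WPre σ d Y Mpre k, ∃ f ∈ WRepOut σ M c k,
      F = fun v => f (act σ (g v)) }

/-- The universality class `U(M₀, …, M_d, N)` of the chain `M₀, …, M_d` followed by one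
extra layer space `N`. -/
def UClassApp1 (σ : ℝ → ℝ) (d : ℕ) (Y : Fin (d + 2) → Type)
    (M : ∀ i : Fin (d + 1), Set ((Y i.castSucc → ℝ) → (Y i.succ → ℝ)))
    {Z : Type} [Fintype Z]
    (N : Set ((Y (Fin.last (d + 1)) → ℝ) → (Z → ℝ))) : Set ((Y 0 → ℝ) → (Z → ℝ)) :=
  UnifClosure { F | ∃ k, ∃ g ∈ WPre σ d Y M k, ∃ f ∈ layerPowOut N k,
      F = fun v => f (act σ (g v)) }

/-- The universality class `U(M₀, …, M_d, N₁, N₂)` of the chain `M₀, …, M_d` followed by two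
extra layer spaces `N₁, N₂`. -/
def UClassApp2 (σ : ℝ → ℝ) (d : ℕ) (Y : Fin (d + 2) → Type)
    (M : ∀ i : Fin (d + 1), Set ((Y i.castSucc → ℝ) → (Y i.succ → ℝ)))
    {Z₁ Z₂ : Type} [Fintype Z₂]
    (N₁ : Set ((Y (Fin.last (d + 1)) → ℝ) → (Z₁ → ℝ)))
    (N₂ : Set ((Z₁ → ℝ) → (Z₂ → ℝ))) : Set ((Y 0 → ℝ) → (Z₂ → ℝ)) :=
  UnifClosure { F | ∃ k₁, ∃ g ∈ WPre σ d Y M k₁, ∃ k₂, ∃ m ∈ layerPow N₁ k₁ k₂,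
      ∃ f ∈ layerPowOut N₂ k₂, F = fun v => f (act σ (m (act σ (g v)))) }

/-- The universality class `U(M₁, M₂, M₃)` of three layer spaces on a common space `ℝ^Z`. -/
def UClass3 (σ : ℝ → ℝ) {Z : Type} [Fintype Z] (M₁ M₂ M₃ : Set ((Z → ℝ) → (Z → ℝ))) :
    Set ((Z → ℝ) → (Z → ℝ)) :=
  UnifClosure { F | ∃ k₁ k₂, ∃ g ∈ layerPowIn M₁ k₁, ∃ m ∈ layerPow M₂ k₁ k₂,
      ∃ f ∈ layerPowOut M₃ k₂, F = fun v => f (act σ (m (act σ (g v)))) }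

/-- The invariant layer space `I = Aff_G(ℝ^Y, ℝ)`: all `G`-invariant affine maps, with `ℝ`
realized as the trivial permutation representation `ℝ^{Unit}`. -/
def InvAff (G : Type) [Group G] {Y : Type} [MulAction G Y] :
    Set ((Y → ℝ) → (Unit → ℝ)) :=
  { f | IsAffine f ∧ ∀ (g : G) (v : Y → ℝ), f (pSMul g v) = f v }

/-- The fully connected layer space `L = Aff(ℝ, ℝ)`, with `ℝ` realized as `ℝ^{Unit}`. -/
def Lfull : Set ((Unit → ℝ) → (Unit → ℝ)) :=
  { f | ∃ a b : ℝ, f = fun v _ => a * v () + b }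

/-- The width-1 convolutional layer space `C ⊆ Aff_G(ℝ^X, ℝ^X)`:
`v ↦ a·v + (bias constant on `G`-orbits)`, i.e. `v ↦ a·v + ∑ⱼ yⱼ 1_{Xⱼ}`. -/
def ConvG (G : Type) [Group G] {X : Type} [MulAction G X] : Set ((X → ℝ) → (X → ℝ)) :=
  { f | ∃ (a : ℝ) (b : X → ℝ), (∀ (g : G) (z : X), b (g • z) = b z) ∧
      f = fun v z => a * v z + b z }

/-- The width-1 convolutional layer space for `S_n` acting on `ℝ^n`:
`C = { v ↦ a·v + b𝟙 }`. -/
def ConvC (n : ℕ) : Set ((Fin n → ℝ) → (Fin n → ℝ)) :=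
  { f | ∃ a b : ℝ, f = fun v i => a * v i + b }

/-- The PointNet (DeepSets) layer space for `S_n` acting on `ℝ^n`:
`P = { v ↦ (a·Id + c·𝟙𝟙ᵀ) v + b𝟙 }`. -/
def PointNetP (n : ℕ) : Set ((Fin n → ℝ) → (Fin n → ℝ)) :=
  { f | ∃ a c b : ℝ, f = fun v i => a * v i + c * (∑ j, v j) + b }
end EquivUnivPreamble

section UniversalApproximation

open Set Filter Topology ContinuousMap

variable {X : Type} [TopologicalSpace X] [CompactSpace X]

/-- The space of real polynomial functions of degree less than `k`. -/
def polyFunLT (k : ℕ) : Submodule ℝ (ℝ → ℝ) :=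
  Submodule.span ℝ (range fun (i : Fin k) (x : ℝ) => x ^ (i : ℕ))

lemma isClosed_polyFunLT (k : ℕ) : IsClosed (polyFunLT k : Set (ℝ → ℝ)) := by
  have : FiniteDimensional ℝ (polyFunLT k) := FiniteDimensional.span_of_finite ℝ (finite_range _)
  exact Submodule.closed_of_finiteDimensional _

lemma exists_polynomial_of_mem_polyFunLT {k : ℕ} {f : ℝ → ℝ} (hf : f ∈ polyFunLT k) :
    ∃ p : Polynomial ℝ, ∀ x, f x = p.eval x := by
  induction hf using Submodule.span_induction with
  | mem f hf =>
    obtain ⟨i, rfl⟩ := hf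
    exact ⟨Polynomial.X ^ (i : ℕ), by simp⟩
  | zero => exact ⟨0, by simp⟩
  | add f g _ _ hf hg =>
    obtain ⟨⟨p, hp⟩, ⟨q, hq⟩⟩ := And.intro hf hg
    exact ⟨p + q, by simp [hp, hq]⟩
  | smul a f _ hf =>
    obtain ⟨p, hp⟩ := hf
    exact ⟨a • p, by simp [hp]⟩

lemma exists_primitive_mem_polyFunLT {k : ℕ} {f : ℝ → ℝ} (hf : f ∈ polyFunLT k) :
    ∃ F ∈ polyFunLT (k + 1), ∀ x, HasDerivAt F (f x) x := by
  induction hf using Submodule.span_induction with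
  | mem f hf =>
    obtain ⟨i, rfl⟩ := hf
    refine ⟨((i : ℝ) + 1)⁻¹ • fun x => x ^ ((i : ℕ) + 1), Submodule.smul_mem _ _
      (Submodule.subset_span ⟨i.succ, by simp⟩), fun x => ?_⟩
    have h := (hasDerivAt_pow ((i : ℕ) + 1) x).const_mul ((i : ℝ) + 1)⁻¹
    have h0 : ((i : ℕ) : ℝ) + 1 ≠ 0 := by positivity
    refine h.congr_deriv ?_
    simp [h0]
  | zero => exact ⟨0, zero_mem _, fun x => hasDerivAt_const x 0⟩
  | add f g _ _ hf hg =>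
    obtain ⟨⟨F, hF, hF'⟩, ⟨G, hG, hG'⟩⟩ := And.intro hf hg
    exact ⟨F + G, add_mem hF hG, fun x => (hF' x).add (hG' x)⟩
  | smul a f _ hf =>
    obtain ⟨F, hF, hF'⟩ := hf
    exact ⟨a • F, Submodule.smul_mem _ _ hF, fun x => (hF' x).const_mul a⟩

lemma mem_polyFunLT_succ_of_hasDerivAt {k : ℕ} {f F : ℝ → ℝ} (hf : f ∈ polyFunLT k)
    (hF : ∀ x, HasDerivAt F (f x) x) : F ∈ polyFunLT (k + 1) := by
  obtain ⟨P, hP, hP'⟩ := exists_primitive_mem_polyFunLT hf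
  have hd : ∀ x, HasDerivAt (F - P) 0 x := fun x => by simpa using (hF x).sub (hP' x)
  have hc := is_const_of_deriv_eq_zero (fun x => (hd x).differentiableAt) (fun x => (hd x).deriv)
  have h1 : (fun _ : ℝ => (1 : ℝ)) ∈ polyFunLT (k + 1) := Submodule.subset_span ⟨0, by simp⟩
  have : F = P + (F - P) 0 • fun _ : ℝ => (1 : ℝ) := by
    ext x
    simp [← hc x 0]
  rw [this]
  exact add_mem hP (Submodule.smul_mem _ _ h1)

lemma intervalIntegral_mem_of_isClosed {E : Type*} [NormedAddCommGroup E] [NormedSpace ℝ E]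
    [CompleteSpace E] {V : Submodule ℝ E} (hV : IsClosed (V : Set E)) {Θ : ℝ → E}
    (hΘ : Continuous Θ) (hmem : ∀ t, Θ t ∈ V) (a b : ℝ) : ∫ t in a..b, Θ t ∈ V := by
  have : CompleteSpace V := hV.completeSpace_coe
  have hc : Continuous fun t => (⟨Θ t, hmem t⟩ : V) := hΘ.subtype_mk _
  have h := V.subtypeL.intervalIntegral_comp_comm
    (hc.intervalIntegrable (μ := MeasureTheory.volume) a b)
  simp only [Submodule.subtypeL_apply] at h
  rw [h]
  exact Submodule.coe_mem _

lemma intervalIntegral_continuousMap_apply {Θ : ℝ → C(X, ℝ)} (hΘ : Continuous Θ) (a b : ℝ)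
    (x : X) : (∫ t in a..b, Θ t) x = ∫ t in a..b, Θ t x :=
  ((evalCLM ℝ x).intervalIntegral_comp_comm (hΘ.intervalIntegrable a b)).symm

/-- If `V` contains all `q · G(w h + b)`, then it contains all `q · h · G'(w h + b)`. -/
lemma mul_deriv_comp_affine_mem {V : Submodule ℝ C(X, ℝ)} (hV : IsClosed (V : Set C(X, ℝ)))
    {q h : C(X, ℝ)} {G g : C(ℝ, ℝ)} (hG : ∀ x, HasDerivAt G (g x) x)
    (hmem : ∀ w b : ℝ, q * G.comp (w • h + const X b) ∈ V) (w b : ℝ) :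
    q * h * g.comp (w • h + const X b) ∈ V := by
  set Θ : ℝ → C(X, ℝ) := fun t => q * h * g.comp ((w + t) • h + const X b) with hΘdef
  have hΘ : Continuous Θ := by
    refine continuous_of_continuous_uncurry _ ?_
    simp only [hΘdef, Function.uncurry_def]
    simp only [mul_apply, comp_apply, ContinuousMap.add_apply, ContinuousMap.smul_apply,
      const_apply]
    fun_prop
  have hint : ∀ s, ∫ t in (0 : ℝ)..s, Θ t =
      q * G.comp ((w + s) • h + const X b) - q * G.comp (w • h + const X b) := by
    intro s
    ext x
    rw [intervalIntegral_continuousMap_apply hΘ]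
    have hd : ∀ t ∈ uIcc 0 s, HasDerivAt (fun t => q x * G ((w + t) * h x + b)) (Θ t x) t := by
      intro t _
      have h1 : HasDerivAt (fun t => (w + t) * h x + b) (h x) t := by
        simpa using (((hasDerivAt_id t).const_add w).mul_const (h x)).add_const b
      have h2 := ((hG ((w + t) * h x + b)).comp t h1).const_mul (q x)
      refine h2.congr_deriv ?_
      simp only [hΘdef, mul_apply, comp_apply, ContinuousMap.add_apply, ContinuousMap.smul_apply,
        const_apply, smul_eq_mul]
      ring
    rw [intervalIntegral.integral_eq_sub_of_hasDerivAt hd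
      (((evalCLM ℝ x).continuous.comp hΘ).intervalIntegrable 0 s)]
    simp
  have hder : HasDerivAt (fun s => ∫ t in (0 : ℝ)..s, Θ t) (Θ 0) 0 :=
    intervalIntegral.integral_hasDerivAt_right (hΘ.intervalIntegrable 0 0)
      hΘ.stronglyMeasurable.stronglyMeasurableAtFilter hΘ.continuousAt
  have hlim := hder.tendsto_slope
  have : Θ 0 ∈ V := by
    refine hV.mem_of_tendsto hlim (Eventually.of_forall fun s => ?_)
    simp only [slope_def_module, hint]
    exact V.smul_mem _ (V.sub_mem (V.sub_mem (hmem _ _) (hmem _ _))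
      (V.sub_mem (hmem _ _) (hmem _ _)))
  simpa [hΘdef] using this

/-- The increment over `[x, x + δ]` of a primitive of `f`. -/
lemma exists_increment_primitive (f : C(ℝ, ℝ)) (δ : ℝ) :
    ∃ G : C(ℝ, ℝ), (∀ x, G x = ∫ t in (0 : ℝ)..δ, f (x + t)) ∧
      ∀ x, HasDerivAt G (f (x + δ) - f x) x := by
  set P : ℝ → ℝ := fun x => ∫ t in (0 : ℝ)..x, f t with hP
  have hPd : ∀ x, HasDerivAt P (f x) x := fun x => by
    exact intervalIntegral.integral_hasDerivAt_right (f.continuous.intervalIntegrable _ _)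
      f.continuous.stronglyMeasurable.stronglyMeasurableAtFilter f.continuous.continuousAt
  have hd : ∀ x, HasDerivAt (fun x => P (x + δ) - P x) (f (x + δ) - f x) x := fun x =>
    ((hPd (x + δ)).comp_add_const x δ).sub (hPd x)
  refine ⟨⟨fun x => P (x + δ) - P x,
    continuous_iff_continuousAt.2 fun x => (hd x).continuousAt⟩, fun x => ?_, hd⟩
  simp only [coe_mk, hP]
  rw [intervalIntegral.integral_interval_sub_left (f.continuous.intervalIntegrable _ _)
    (f.continuous.intervalIntegrable _ _), intervalIntegral.integral_comp_add_left]
  simp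

lemma mul_pow_mem_or_mem_polyFunLT {V : Submodule ℝ C(X, ℝ)}
    (hV : IsClosed (V : Set C(X, ℝ))) (h : C(X, ℝ)) (k : ℕ) (q : C(X, ℝ)) (f : C(ℝ, ℝ))
    (hmem : ∀ w b : ℝ, q * f.comp (w • h + const X b) ∈ V) :
    q * h ^ k ∈ V ∨ (f : ℝ → ℝ) ∈ polyFunLT k := by
  induction k generalizing q f with
  | zero =>
    by_cases hf : ∃ b, f b ≠ 0
    · obtain ⟨b, hb⟩ := hf
      left
      have h1 := V.smul_mem (f b)⁻¹ (hmem 0 b)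
      convert h1 using 1
      ext x
      simp
      field_simp
    · right
      push Not at hf
      rw [show (f : ℝ → ℝ) = 0 from funext hf]
      exact zero_mem _
  | succ k ih =>
    by_cases hq : q * h ^ (k + 1) ∈ V
    · exact Or.inl hq
    right
    choose G hG hG' using exists_increment_primitive f
    have hGmem : ∀ δ (w b : ℝ), q * (G δ).comp (w • h + const X b) ∈ V := by
      intro δ w b
      have hΘ : Continuous fun t : ℝ => q * f.comp (w • h + const X (b + t)) := by
        refine continuous_of_continuous_uncurry _ ?_
        simp only [Function.uncurry_def, mul_apply, comp_apply, ContinuousMap.add_apply, ContinuousMap.smul_apply,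
      const_apply]
        fun_prop
      convert intervalIntegral_mem_of_isClosed hV hΘ (fun t => hmem w (b + t)) 0 δ using 1
      ext x
      rw [intervalIntegral_continuousMap_apply hΘ]
      simp [hG, add_assoc]
    have hGpoly : ∀ δ, (G δ : ℝ → ℝ) ∈ polyFunLT (k + 1) := by
      intro δ
      let g : C(ℝ, ℝ) := ⟨fun x => f (x + δ) - f x, by fun_prop⟩
      rcases ih (q * h) g (mul_deriv_comp_affine_mem hV (hG' δ) (hGmem δ)) with h1 | h1
      · exact absurd (by rwa [pow_succ', ← mul_assoc]) hq
      · exact mem_polyFunLT_succ_of_hasDerivAt h1 (hG' δ)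
    have hlim : Tendsto (fun δ : ℝ => δ⁻¹ • (G δ : ℝ → ℝ)) (𝓝[≠] 0) (𝓝 f) := by
      refine tendsto_pi_nhds.2 fun x => ?_
      have hc : Continuous fun t => f (x + t) := by fun_prop
      have hd : HasDerivAt (fun δ => ∫ t in (0 : ℝ)..δ, f (x + t)) (f (x + 0)) 0 :=
        intervalIntegral.integral_hasDerivAt_right (hc.intervalIntegrable 0 0)
          hc.stronglyMeasurable.stronglyMeasurableAtFilter hc.continuousAt
      have := hd.tendsto_slope
      simpa [slope_fun_def, hG] using this
    exact (isClosed_polyFunLT (k + 1)).mem_of_tendsto hlim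
      (Eventually.of_forall fun δ => Submodule.smul_mem _ _ (hGpoly δ))

/-- Stone–Weierstrass theorem for subalgebras which need not separate points. -/
lemma mem_topologicalClosure_of_factors (A : Subalgebra ℝ C(X, ℝ)) (f : C(X, ℝ))
    (hf : ∀ x y, (∀ g ∈ A, g x = g y) → f x = f y) : f ∈ A.topologicalClosure := by
  let Φ : X → (A → ℝ) := fun x g => (g : C(X, ℝ)) x
  have hΦ : Continuous Φ := continuous_pi fun g => (g : C(X, ℝ)).continuous
  let π : C(X, range Φ) := ⟨rangeFactorization Φ, hΦ.subtype_mk _⟩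
  have hπ : IsQuotientMap π :=
    π.continuous.isClosedMap.isQuotientMap π.continuous rangeFactorization_surjective
  have : CompactSpace (range Φ) := isCompact_iff_compactSpace.1 (isCompact_range hΦ)
  have hfac : Function.FactorsThrough f π := fun x y hxy =>
    hf x y fun g hg => congrFun (congrArg Subtype.val hxy) ⟨g, hg⟩
  let B : Subalgebra ℝ C(range Φ, ℝ) := A.comap (compRightAlgHom ℝ ℝ π)
  have hB : B.SeparatesPoints := by
    intro y z hyz
    obtain ⟨g, hg⟩ := Function.ne_iff.1 (Subtype.coe_injective.ne hyz)
    let e : C(range Φ, ℝ) := ⟨fun y => (y : A → ℝ) g,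
      (continuous_apply g).comp continuous_subtype_val⟩
    refine ⟨e, ⟨e, ?_, rfl⟩, hg⟩
    change compRightAlgHom ℝ ℝ π e ∈ A
    have : compRightAlgHom ℝ ℝ π e = g := by ext x; rfl
    rw [this]
    exact g.2
  have htop := subalgebra_topologicalClosure_eq_top_of_separatesPoints B hB
  have hmem : hπ.lift f hfac ∈ B.topologicalClosure := htop ▸ Algebra.mem_top
  have hcomp : (hπ.lift f hfac).comp π = f := hπ.lift_comp f hfac
  rw [← hcomp]
  exact map_mem_closure (f := fun u : C(range Φ, ℝ) => u.comp π) (continuous_precomp π) hmem fun g hg => hg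

/-- A closed space of functions containing all `σ(w h + b)` contains all `ρ ∘ h`. -/
lemma comp_mem_of_comp_affine_mem {σ : C(ℝ, ℝ)} (hσ : NotPolynomial σ)
    {V : Submodule ℝ C(X, ℝ)} (hV : IsClosed (V : Set C(X, ℝ))) {h : C(X, ℝ)}
    (hmem : ∀ w b : ℝ, σ.comp (w • h + const X b) ∈ V) (ρ : C(ℝ, ℝ)) : ρ.comp h ∈ V := by
  have hpow : ∀ k, h ^ k ∈ V := by
    intro k
    rcases mul_pow_mem_or_mem_polyFunLT hV h k 1 σ (by simpa using hmem) with h1 | h1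
    · simpa using h1
    · exact absurd (exists_polynomial_of_mem_polyFunLT h1) hσ
  have hle : (Algebra.adjoin ℝ {h}).toSubmodule ≤ V := by
    rw [Algebra.adjoin_eq_span, Submodule.span_le]
    intro g hg
    obtain ⟨k, rfl⟩ := Submonoid.mem_closure_singleton.1 hg
    exact hpow k
  have hcl := mem_topologicalClosure_of_factors (Algebra.adjoin ℝ {h}) (ρ.comp h)
    fun x y hxy => congrArg ρ (hxy h (Algebra.self_mem_adjoin_singleton ℝ h))
  exact closure_minimal hle hV hcl

end UniversalApproximation

section EquivariantNetworks

open Set Filter Topology ContinuousMap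

variable {n : ℕ}

lemma ConvC_subset_PointNetP (n : ℕ) : ConvC n ⊆ PointNetP n := by
  rintro _ ⟨a, b, rfl⟩
  exact ⟨a, 0, b, by simp⟩

lemma layerPowIn_mono {Y Z : Type} {M N : Set ((Y → ℝ) → (Z → ℝ))} (h : M ⊆ N) (k : ℕ) :
    layerPowIn M k ⊆ layerPowIn N k :=
  fun _ ⟨f, hf, hF⟩ => ⟨f, fun i => h (hf i), hF⟩

lemma layerPowOut_mono {Y Z : Type} {M N : Set ((Y → ℝ) → (Z → ℝ))} (h : M ⊆ N) (k : ℕ) :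
    layerPowOut M k ⊆ layerPowOut N k :=
  fun _ ⟨f, hf, hF⟩ => ⟨f, fun i => h (hf i), hF⟩

lemma UnifClosure_mono {A B : Type} [TopologicalSpace A] [PseudoMetricSpace B]
    {S T : Set (A → B)} (h : S ⊆ T) : UnifClosure S ⊆ UnifClosure T := fun _ hF K hK ε hε =>
  let ⟨g, hg, hd⟩ := hF K hK ε hε
  ⟨g, h hg, hd⟩

lemma UClass3_ConvC_subset_UClass3_PointNetP (σ : ℝ → ℝ) (n : ℕ) :
    UClass3 σ (ConvC n) (PointNetP n) (ConvC n) ⊆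
      UClass3 σ (PointNetP n) (PointNetP n) (PointNetP n) := by
  refine UnifClosure_mono ?_
  rintro F ⟨k₁, k₂, g, hg, m, hm, f, hf, rfl⟩
  exact ⟨k₁, k₂, g, layerPowIn_mono (ConvC_subset_PointNetP n) _ hg, m, hm, f,
    layerPowOut_mono (ConvC_subset_PointNetP n) _ hf, rfl⟩

lemma continuous_of_mem_UnifClosure {A B : Type} [TopologicalSpace A] [LocallyCompactSpace A]
    [PseudoMetricSpace B] {S : Set (A → B)} (hS : ∀ g ∈ S, Continuous g) {F : A → B}
    (hF : F ∈ UnifClosure S) : Continuous F := by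
  refine continuous_of_locally_uniform_approx_of_continuousAt fun x u hu => ?_
  obtain ⟨ε, hε, hεu⟩ := Metric.mem_uniformity_dist.1 hu
  obtain ⟨K, hK, hxK⟩ := exists_compact_mem_nhds x
  obtain ⟨g, hg, hd⟩ := hF K hK ε hε
  exact ⟨K, hxK, g, (hS g hg).continuousAt, fun y hy => hεu (hd y hy)⟩

/-- A closure point of `S` satisfies every relation `R (F x) = F y` with `R` nonexpansive which
is satisfied by all elements of `S`. -/
lemma map_eq_of_mem_UnifClosure {A B : Type} [TopologicalSpace A] [MetricSpace B]
    {S : Set (A → B)} {x y : A} {R : B → B} (hR : ∀ a b, dist (R a) (R b) ≤ dist a b)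
    (hS : ∀ g ∈ S, R (g x) = g y) {F : A → B} (hF : F ∈ UnifClosure S) : R (F x) = F y := by
  refine eq_of_forall_dist_le fun ε hε => ?_
  obtain ⟨g, hg, hd⟩ := hF {x, y} (toFinite _).isCompact (ε / 2) (half_pos hε)
  have hx := hd x (by simp)
  have hy := hd y (by simp)
  calc dist (R (F x)) (F y) ≤ dist (R (F x)) (R (g x)) + dist (g y) (F y) := by
        rw [← hS g hg]; exact dist_triangle _ _ _
    _ ≤ ε / 2 + ε / 2 := by
        rw [dist_comm (g y)]
        exact add_le_add ((hR _ _).trans hx.le) hy.le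
    _ = ε := add_halves ε

lemma continuous_of_mem_PointNetP {f : (Fin n → ℝ) → (Fin n → ℝ)} (hf : f ∈ PointNetP n) :
    Continuous f := by
  obtain ⟨a, c, b, rfl⟩ := hf
  fun_prop

lemma apply_comp_perm_of_mem_PointNetP {f : (Fin n → ℝ) → (Fin n → ℝ)} (hf : f ∈ PointNetP n)
    (e : Equiv.Perm (Fin n)) (v : Fin n → ℝ) (i : Fin n) :
    f (fun l => v (e l)) i = f v (e i) := by
  obtain ⟨a, c, b, rfl⟩ := hf
  simp only [Equiv.sum_comp e v]

lemma continuous_and_equivariant_of_mem_UClass3_PointNetP {σ : ℝ → ℝ} (hσ : Continuous σ)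
    {F : (Fin n → ℝ) → (Fin n → ℝ)}
    (hF : F ∈ UClass3 σ (PointNetP n) (PointNetP n) (PointNetP n)) :
    Continuous F ∧ ∀ (g : Equiv.Perm (Fin n)) (v : Fin n → ℝ),
      F (fun i => v (g⁻¹ i)) = fun i => F v (g⁻¹ i) := by
  constructor
  · refine continuous_of_mem_UnifClosure ?_ hF
    rintro _ ⟨k₁, k₂, g, ⟨g', hg', hg⟩, m, ⟨m', hm', hm⟩, f, ⟨f', hf', hf⟩, rfl⟩
    have hgc : Continuous g := by
      refine continuous_pi fun p => ?_
      simp only [hg]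
      exact (continuous_apply _).comp (continuous_of_mem_PointNetP (hg' _))
    have hmc : Continuous m := by
      refine continuous_pi fun p => ?_
      simp only [hm]
      exact continuous_finsetSum _ fun j _ => (continuous_apply _).comp
        ((continuous_of_mem_PointNetP (hm' _ _)).comp (by fun_prop))
    have hfc : Continuous f := by
      refine continuous_pi fun p => ?_
      simp only [hf]
      exact continuous_finsetSum _ fun j _ => (continuous_apply _).comp
        ((continuous_of_mem_PointNetP (hf' _)).comp (by fun_prop))
    have hact : ∀ Z : Type, Continuous (act σ : (Z → ℝ) → (Z → ℝ)) := fun Z =>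
      continuous_pi fun z => hσ.comp (continuous_apply z)
    exact hfc.comp ((hact _).comp (hmc.comp ((hact _).comp hgc)))
  · intro g v
    refine (map_eq_of_mem_UnifClosure (R := fun w i => w (g⁻¹ i)) (fun a b => ?_) ?_ hF).symm
    · exact (dist_pi_le_iff dist_nonneg).2 fun i => dist_le_pi_dist a b _
    rintro _ ⟨k₁, k₂, N₁, ⟨N₁', hN₁', hN₁⟩, m, ⟨m', hm', hm⟩, f, ⟨f', hf', hf⟩, rfl⟩
    ext i
    simp only [hf, hm, act, hN₁]
    refine Finset.sum_congr rfl fun j _ => ?_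
    rw [← apply_comp_perm_of_mem_PointNetP (hf' j)]
    congr 1
    ext l
    congr 1
    refine Finset.sum_congr rfl fun j' _ => ?_
    rw [← apply_comp_perm_of_mem_PointNetP (hm' _ _)]
    congr 1
    ext l'
    rw [← apply_comp_perm_of_mem_PointNetP (hN₁' _)]

/-- Tuples with equal power-type sums `∑ q(v_l)` agree up to a permutation. -/
lemma exists_perm_of_sum_eq {v w : Fin n → ℝ}
    (h : ∀ q : C(ℝ, ℝ), ∑ l, q (v l) = ∑ l, q (w l)) :
    ∃ e : Equiv.Perm (Fin n), ∀ l, w (e l) = v l := by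
  classical
  have hcard : ∀ x, Fintype.card {l // v l = x} = Fintype.card {l // w l = x} := by
    intro x
    set s : Finset ℝ := insert x (Finset.univ.image v ∪ Finset.univ.image w) with hs
    let q : C(ℝ, ℝ) := ⟨fun y => (Lagrange.basis s id x).eval y, Polynomial.continuous _⟩
    have hq : ∀ y ∈ s, q y = if y = x then 1 else 0 := by
      intro y hy
      split_ifs with hyx
      · subst hyx
        exact Lagrange.eval_basis_self (Function.injective_id.injOn) hy
      · exact Lagrange.eval_basis_of_ne (v := id) (Ne.symm hyx) hy
    have hv : ∀ l, q (v l) = if v l = x then 1 else 0 := fun l => hq _ (by simp [hs])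
    have hw : ∀ l, q (w l) = if w l = x then 1 else 0 := fun l => hq _ (by simp [hs])
    have := h q
    simp only [hv, hw, Finset.sum_boole] at this
    rw [Fintype.card_subtype, Fintype.card_subtype]
    exact_mod_cast this
  exact ⟨Equiv.ofFiberEquiv fun x => Fintype.equivOfCardEq (hcard x),
    fun l => Equiv.ofFiberEquiv_map _ l⟩

lemma exists_perm_of_sum_eq_of_apply_eq {v w : Fin n → ℝ} {i j : Fin n} (hij : v i = w j)
    (h : ∀ q : C(ℝ, ℝ), ∑ l, q (v l) = ∑ l, q (w l)) :
    ∃ e : Equiv.Perm (Fin n), (∀ l, w (e l) = v l) ∧ e i = j := by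
  obtain ⟨e, he⟩ := exists_perm_of_sum_eq h
  refine ⟨e.trans (Equiv.swap (e i) j), fun l => ?_, by simp⟩
  have hw : w (e i) = w j := (he i).trans hij
  rw [Equiv.trans_apply, ← he l]
  rcases eq_or_ne (e l) (e i) with h1 | h1
  · rw [h1, Equiv.swap_apply_left, hw]
  rcases eq_or_ne (e l) j with h2 | h2
  · rw [h2, Equiv.swap_apply_right, hw]
  · rw [Equiv.swap_apply_of_ne_of_ne h1 h2]

section Features

variable (K : Set (Fin n → ℝ))

/-- The function `(v, i) ↦ v i`. -/
def coordMap : C(K × Fin n, ℝ) :=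
  ⟨fun x => (x.1 : Fin n → ℝ) x.2, by
    refine continuous_prod_of_discrete_right.2 fun i => ?_
    exact (continuous_apply i).comp continuous_subtype_val⟩

variable [CompactSpace K]

/-- The operator `f ↦ ((v, i) ↦ ∑ l, f (v, l))`. -/
def sumCoord : C(K × Fin n, ℝ) →L[ℝ] C(K × Fin n, ℝ) where
  toFun f := ∑ l, f.comp ⟨fun x => (x.1, l), by fun_prop⟩
  map_add' f g := by ext; simp [Finset.sum_add_distrib]
  map_smul' a f := by ext; simp [Finset.mul_sum]
  cont := continuous_finsetSum _ fun l _ => continuous_precomp _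

lemma sumCoord_apply (f : C(K × Fin n, ℝ)) (x : K × Fin n) :
    sumCoord K f x = ∑ l, f (x.1, l) := by
  simp [sumCoord]

/-- The neuron `(v, i) ↦ σ(w v_i + b)` with `p = (w, b)`. -/
def neuron (σ : C(ℝ, ℝ)) (p : ℝ × ℝ) : C(K × Fin n, ℝ) :=
  σ.comp (p.1 • coordMap K + const _ p.2)

/-- The pre-activations in the second hidden layer. -/
def preActivations (σ : C(ℝ, ℝ)) : Submodule ℝ C(K × Fin n, ℝ) :=
  Submodule.span ℝ (range (neuron K σ)) ⊔
    Submodule.span ℝ (range fun p => sumCoord K (neuron K σ p))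

lemma add_sumCoord_mem_topologicalClosure {σ : C(ℝ, ℝ)} (hσ : NotPolynomial σ) (p q : C(ℝ, ℝ)) :
    p.comp (coordMap K) + sumCoord K (q.comp (coordMap K)) ∈
      (preActivations K σ).topologicalClosure := by
  set V := (preActivations K σ).topologicalClosure with hV
  have hVc : IsClosed (V : Set C(K × Fin n, ℝ)) := Submodule.isClosed_topologicalClosure _
  have hle : preActivations K σ ≤ V := Submodule.le_topologicalClosure _
  refine V.add_mem ?_ ?_
  · exact comp_mem_of_comp_affine_mem hσ hVc (fun w b => hle <| Submodule.mem_sup_left <|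
      Submodule.subset_span ⟨(w, b), rfl⟩) p
  · exact comp_mem_of_comp_affine_mem (V := V.comap (sumCoord K).toLinearMap) (h := coordMap K) hσ
      (hVc.preimage (sumCoord K).continuous) (fun w b => hle <| Submodule.mem_sup_right <|
        Submodule.subset_span ⟨(w, b), rfl⟩) q

/-- The networks without bias in the second and third layers. -/
def networks (σ : C(ℝ, ℝ)) : Submodule ℝ C(K × Fin n, ℝ) :=
  Submodule.span ℝ ((fun h => σ.comp h) '' (preActivations K σ : Set C(K × Fin n, ℝ)))

lemma comp_mem_topologicalClosure_networks {σ : C(ℝ, ℝ)} (hσ : NotPolynomial σ)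
    {h : C(K × Fin n, ℝ)} (hh : h ∈ (preActivations K σ).topologicalClosure) (ρ : C(ℝ, ℝ)) :
    ρ.comp h ∈ (networks K σ).topologicalClosure := by
  refine comp_mem_of_comp_affine_mem hσ (Submodule.isClosed_topologicalClosure _)
    (fun w b => ?_) ρ
  have hb : const _ b ∈ (preActivations K σ).topologicalClosure := by
    have := add_sumCoord_mem_topologicalClosure K hσ (const _ b) 0
    convert this using 1
    ext x
    simp
  have hmem := Submodule.add_mem _ (Submodule.smul_mem _ w hh) hb
  exact map_mem_closure (continuous_postcomp σ) hmem
    fun g hg => Submodule.subset_span ⟨g, hg, rfl⟩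

/-- The exponentials of closure points of the pre-activations. -/
def expPreActivations (σ : C(ℝ, ℝ)) : Submonoid C(K × Fin n, ℝ) where
  carrier := (fun h => (⟨Real.exp, Real.continuous_exp⟩ : C(ℝ, ℝ)).comp h) ''
    ((preActivations K σ).topologicalClosure : Set C(K × Fin n, ℝ))
  one_mem' := ⟨0, zero_mem _, by ext; simp⟩
  mul_mem' := by
    rintro _ _ ⟨g, hg, rfl⟩ ⟨h, hh, rfl⟩
    exact ⟨g + h, add_mem hg hh, by ext; simp [Real.exp_add]⟩

lemma adjoin_expPreActivations_le {σ : C(ℝ, ℝ)} (hσ : NotPolynomial σ) :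
    (Algebra.adjoin ℝ (expPreActivations K σ : Set C(K × Fin n, ℝ))).toSubmodule ≤
      (networks K σ).topologicalClosure := by
  rw [Algebra.adjoin_eq_span, Submonoid.closure_eq, Submodule.span_le]
  rintro _ ⟨h, hh, rfl⟩
  exact comp_mem_topologicalClosure_networks K hσ hh _

lemma mem_topologicalClosure_networks {σ : C(ℝ, ℝ)} (hσ : NotPolynomial σ)
    {F : (Fin n → ℝ) → (Fin n → ℝ)}
    (hF : ∀ (g : Equiv.Perm (Fin n)) (v : Fin n → ℝ),
      F (fun i => v (g⁻¹ i)) = fun i => F v (g⁻¹ i))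
    {f : C(K × Fin n, ℝ)} (hf : ∀ x, f x = F x.1 x.2) :
    f ∈ (networks K σ).topologicalClosure := by
  refine closure_minimal (adjoin_expPreActivations_le K hσ)
    (Submodule.isClosed_topologicalClosure _) (mem_topologicalClosure_of_factors _ f ?_)
  rintro ⟨v, i⟩ ⟨w, j⟩ hsep
  have key : ∀ p q : C(ℝ, ℝ), p ((v : Fin n → ℝ) i) + ∑ l, q ((v : Fin n → ℝ) l) =
      p ((w : Fin n → ℝ) j) + ∑ l, q ((w : Fin n → ℝ) l) := by
    intro p q
    have := hsep _ (Algebra.subset_adjoin ⟨_, add_sumCoord_mem_topologicalClosure K hσ p q, rfl⟩)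
    simpa [sumCoord_apply, coordMap] using this
  have hij : (v : Fin n → ℝ) i = (w : Fin n → ℝ) j := by simpa using key (.id ℝ) 0
  obtain ⟨e, he, hei⟩ := exists_perm_of_sum_eq_of_apply_eq hij fun q => by simpa using key 0 q
  have h1 := hF e⁻¹ w
  simp only [inv_inv, he] at h1
  rw [hf, hf]
  exact (congrFun h1 i).trans (congrArg _ hei)

end Features

/-- Elements of `networks` are computed by actual networks. -/
lemma exists_network_of_mem_networks {K : Set (Fin n → ℝ)} [CompactSpace K] {σ : C(ℝ, ℝ)}
    {f : C(K × Fin n, ℝ)} (hf : f ∈ networks K σ) :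
    ∃ F ∈ { F | ∃ k₁ k₂, ∃ g ∈ layerPowIn (ConvC n) k₁, ∃ m ∈ layerPow (PointNetP n) k₁ k₂,
      ∃ f ∈ layerPowOut (ConvC n) k₂, F = fun v => f (act σ (m (act σ (g v)))) },
      ∀ x, f x = F x.1 x.2 := by
  classical
  obtain ⟨k₂, a, h, rfl⟩ := Submodule.mem_span_set'.1 hf
  have hrep : ∀ k : Fin k₂, ∃ α γ : ℝ × ℝ →₀ ℝ,
      (h k : C(K × Fin n, ℝ)) = σ.comp (α.sum (fun p c => c • neuron K σ p) +
        γ.sum fun p c => c • sumCoord K (neuron K σ p)) := by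
    intro k
    obtain ⟨u, hu, hk⟩ := (h k).2
    obtain ⟨y, hy, z, hz, rfl⟩ := Submodule.mem_sup.1 hu
    obtain ⟨α, rfl⟩ := Finsupp.mem_span_range_iff_exists_finsupp.1 hy
    obtain ⟨γ, rfl⟩ := Finsupp.mem_span_range_iff_exists_finsupp.1 hz
    exact ⟨α, γ, hk.symm⟩
  choose α γ hαγ using hrep
  let s : Finset (ℝ × ℝ) := Finset.univ.biUnion fun k => (α k).support ∪ (γ k).support
  have hα : ∀ k, (α k).support ⊆ s := fun k =>
    Finset.subset_union_left.trans (Finset.subset_biUnion_of_mem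
      (fun k => (α k).support ∪ (γ k).support) (Finset.mem_univ k))
  have hγ : ∀ k, (γ k).support ⊆ s := fun k =>
    Finset.subset_union_right.trans (Finset.subset_biUnion_of_mem
      (fun k => (α k).support ∪ (γ k).support) (Finset.mem_univ k))
  let p : Fin s.card → ℝ × ℝ := fun j => (s.equivFin.symm j : ℝ × ℝ)
  have hsum : ∀ u : ℝ × ℝ → ℝ, ∑ j, u (p j) = ∑ t ∈ s, u t := fun u => by
    rw [← Finset.sum_coe_sort s]
    exact Equiv.sum_comp s.equivFin.symm fun t : s => u t
  refine ⟨_, ⟨s.card, k₂, fun v t => (p t.1).1 * v t.2 + (p t.1).2,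
    ⟨fun j v i => (p j).1 * v i + (p j).2, fun j => ⟨_, _, rfl⟩, fun _ _ => rfl⟩,
    fun v t => ∑ j, (α t.1 (p j) * v (j, t.2) + γ t.1 (p j) * (∑ l, v (j, l)) + 0),
    ⟨fun k j v i => α k (p j) * v i + γ k (p j) * (∑ l, v l) + 0,
      fun k j => ⟨_, _, _, rfl⟩, fun _ _ => rfl⟩,
    fun v i => ∑ k, (a k * v (k, i) + 0),
    ⟨fun k v i => a k * v i + 0, fun k => ⟨_, _, rfl⟩, fun _ _ => rfl⟩, rfl⟩, ?_⟩
  intro x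
  simp only [coe_sum, Finset.sum_apply, ContinuousMap.smul_apply, hαγ, act, add_zero, smul_eq_mul]
  refine Finset.sum_congr rfl fun k _ => ?_
  congr 1
  rw [comp_apply, ContinuousMap.add_apply, Finsupp.sum_of_support_subset _ (hα k) _ (by simp),
    Finsupp.sum_of_support_subset _ (hγ k) _ (by simp), Finset.sum_add_distrib,
    hsum fun t => α k t * σ (t.1 * (x.1 : Fin n → ℝ) x.2 + t.2),
    hsum fun t => γ k t * ∑ l, σ (t.1 * (x.1 : Fin n → ℝ) l + t.2)]
  simp [sumCoord_apply, neuron, coordMap]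

lemma mem_UClass3_of_continuous_of_equivariant {σ : ℝ → ℝ} (hσc : Continuous σ)
    (hσp : NotPolynomial σ) {F : (Fin n → ℝ) → (Fin n → ℝ)} (hFc : Continuous F)
    (hF : ∀ (g : Equiv.Perm (Fin n)) (v : Fin n → ℝ),
      F (fun i => v (g⁻¹ i)) = fun i => F v (g⁻¹ i)) :
    F ∈ UClass3 σ (ConvC n) (PointNetP n) (ConvC n) := by
  intro K hK ε hε
  have : CompactSpace K := isCompact_iff_compactSpace.1 hK
  let f : C(K × Fin n, ℝ) := ⟨fun x => F x.1 x.2, continuous_prod_of_discrete_right.2 fun i =>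
    (continuous_apply i).comp (hFc.comp continuous_subtype_val)⟩
  have hf := mem_topologicalClosure_networks K (σ := ⟨σ, hσc⟩) hσp hF (f := f) fun _ => rfl
  obtain ⟨g, hg, hd⟩ := Metric.mem_closure_iff.1 hf ε hε
  obtain ⟨G, hG, hGg⟩ := exists_network_of_mem_networks hg
  refine ⟨G, hG, fun v hv => (dist_pi_lt_iff hε).2 fun i => ?_⟩
  have := (ContinuousMap.dist_lt_iff hε).1 hd (⟨v, hv⟩, i)
  rwa [hGg] at this

end EquivariantNetworks

/-- Remark `rmk:subopt-threshold`, recovering Segol–Lipman: for `σ`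
continuous and not a polynomial, `U(C, P, C) = U(P, P, P) = C_{S_n}(ℝ^n, ℝ^n)`, the space
of all continuous `S_n`-equivariant maps `ℝ^n → ℝ^n`. -/
theorem UCPC_eq_UPPP_eq_equivariant_continuous
    (n : ℕ) (hn : 1 ≤ n) (σ : ℝ → ℝ) (hσc : Continuous σ) (hσp : NotPolynomial σ) :
    UClass3 σ (ConvC n) (PointNetP n) (ConvC n)
        = UClass3 σ (PointNetP n) (PointNetP n) (PointNetP n) ∧
    UClass3 σ (ConvC n) (PointNetP n) (ConvC n)
        = { F : (Fin n → ℝ) → (Fin n → ℝ) | Continuous F ∧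
            ∀ (g : Equiv.Perm (Fin n)) (v : Fin n → ℝ),
              F (fun i => v (g⁻¹ i)) = fun i => F v (g⁻¹ i) } := by
  have hsub := UClass3_ConvC_subset_UClass3_PointNetP σ n
  refine ⟨hsub.antisymm fun F hF => ?_, Set.Subset.antisymm (fun F hF => ?_) fun F hF => ?_⟩
  · obtain ⟨hFc, hFe⟩ := continuous_and_equivariant_of_mem_UClass3_PointNetP hσc hF
    exact mem_UClass3_of_continuous_of_equivariant hσc hσp hFc hFe
  · exact continuous_and_equivariant_of_mem_UClass3_PointNetP hσc (hsub hF)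
  · exact mem_UClass3_of_continuous_of_equivariant hσc hσp hF.1 hF.2
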